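/- arXiv:1608.06375 — 5 statements merged into one kernel-verified Lean document; each statement's English description precedes it below -/
import Mathlib

section
/- For every n ∈ ℕ, the function f_n is infinitely differentiable and satisfies the harmonic-oscillator eigenvalue equation −α²·(f_n)″(x) + x²·f_n(x) = (2·n + 1)·α·f_n(x) for all x ∈ ℝ. (In particular, f_n is an eigenvector of H = α²Δ + x² with eigenvalue (2n+1)α.) -/
/-!
With `K = α d/dx + x` and `L = -α d/dx + x`, the product rule gives the two factorizations
`H = L K + α = K L - α`. Hence `H L = (L K + α) L = L (H + α) + α L = L H + 2 α L`, so `L` raises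
every eigenvalue of `H` by `2 α`. The ground state `f₀` is annihilated by `K`, so `H f₀ = α f₀`,
and applying `L` to it `n` times gives the eigenvalue `α + 2 n α`.
-/

/-- The annihilation-type operator `(K f)(x) = α·f′(x) + x·f(x)`. -/
noncomputable def Kop (α : ℝ) (f : ℝ → ℝ) : ℝ → ℝ := fun x => α * deriv f x + x * f x

/-- The creation-type operator `(L f)(x) = −α·f′(x) + x·f(x)`. -/
noncomputable def Lop (α : ℝ) (f : ℝ → ℝ) : ℝ → ℝ := fun x => -α * deriv f x + x * f x

/-- The harmonic oscillator `(H f)(x) = −α²·f″(x) + x²·f(x)`. -/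
noncomputable def Hop (α : ℝ) (f : ℝ → ℝ) : ℝ → ℝ :=
  fun x => -α ^ 2 * deriv (deriv f) x + x ^ 2 * f x

/-- The Gaussian ground state `f₀(x) = exp(−x²/(2α))`. -/
noncomputable def hermiteF₀ (α : ℝ) : ℝ → ℝ := fun x => Real.exp (-(x ^ 2) / (2 * α))

/-- The Hermite-type functions `f_n = L^[n] f₀`. -/
noncomputable def hermiteF (α : ℝ) (n : ℕ) : ℝ → ℝ := (Lop α)^[n] (hermiteF₀ α)

open scoped ContDiff

section

variable {α : ℝ} {f g : ℝ → ℝ}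

lemma Lop_add (hf : Differentiable ℝ f) (hg : Differentiable ℝ g) :
    Lop α (f + g) = Lop α f + Lop α g := by
  funext x
  simp only [Lop, Pi.add_apply, deriv_add (hf x) (hg x)]
  ring

lemma Lop_smul (c : ℝ) (f : ℝ → ℝ) : Lop α (c • f) = c • Lop α f := by
  funext x
  simp only [Lop, Pi.smul_apply, smul_eq_mul, deriv_const_smul_field]
  ring

lemma Lop_zero : Lop α 0 = 0 := by
  simpa only [zero_smul] using Lop_smul (α := α) 0 0

lemma contDiff_Lop {n : WithTop ℕ∞} (hf : ContDiff ℝ (n + 1) f) : ContDiff ℝ n (Lop α f) :=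
  (contDiff_const.mul hf.deriv').add (contDiff_id.mul (hf.of_le le_self_add))

lemma contDiff_Lop_iterate (hf : ContDiff ℝ ∞ f) (n : ℕ) : ContDiff ℝ ∞ ((Lop α)^[n] f) :=
  Function.Iterate.rec (fun g => ContDiff ℝ ∞ g) hf (fun _ hg => contDiff_Lop (n := ∞) hg) n

lemma Lop_Kop (hf : Differentiable ℝ f) (hf' : Differentiable ℝ (deriv f)) :
    Lop α (Kop α f) = Hop α f - α • f := by
  funext x
  have deriv_Kop : deriv (Kop α f) x = α * deriv (deriv f) x + (1 * f x + x * deriv f x) :=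
    (((hf' x).hasDerivAt.const_mul α).add ((hasDerivAt_id' x).mul (hf x).hasDerivAt)).deriv
  simp only [Lop, deriv_Kop]
  simp only [Kop, Hop, Pi.sub_apply, Pi.smul_apply, smul_eq_mul]
  ring

lemma Kop_Lop (hf : Differentiable ℝ f) (hf' : Differentiable ℝ (deriv f)) :
    Kop α (Lop α f) = Hop α f + α • f := by
  funext x
  have deriv_Lop : deriv (Lop α f) x = -α * deriv (deriv f) x + (1 * f x + x * deriv f x) :=
    (((hf' x).hasDerivAt.const_mul (-α)).add ((hasDerivAt_id' x).mul (hf x).hasDerivAt)).deriv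
  simp only [Kop, deriv_Lop]
  simp only [Lop, Hop, Pi.add_apply, Pi.smul_apply, smul_eq_mul]
  ring

lemma Hop_Lop (hf : ContDiff ℝ 3 f) :
    Hop α (Lop α f) = Lop α (Hop α f) + (2 * α) • Lop α f := by
  have hf₁ : ContDiff ℝ 2 (deriv f) := hf.deriv'
  have hf₂ : ContDiff ℝ 1 (deriv (deriv f)) := hf₁.deriv'
  have hLf : ContDiff ℝ 2 (Lop α f) := contDiff_Lop hf
  have hHf : Differentiable ℝ (Hop α f) :=
    ((hf₂.differentiable one_ne_zero).const_mul _).add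
      ((differentiable_id.pow 2).mul (hf.differentiable three_ne_zero))
  calc
    Hop α (Lop α f) = Lop α (Kop α (Lop α f)) + α • Lop α f := by
      rw [Lop_Kop (hLf.differentiable two_ne_zero) hLf.differentiable_deriv_two, sub_add_cancel]
    _ = Lop α (Hop α f + α • f) + α • Lop α f := by
      rw [Kop_Lop (hf.differentiable three_ne_zero) (hf₁.differentiable two_ne_zero)]
    _ = Lop α (Hop α f) + (2 * α) • Lop α f := by
      rw [Lop_add hHf ((hf.differentiable three_ne_zero).const_smul α), Lop_smul]
      module

lemma Hop_Lop_iterate_of_Hop_eq_smul (hf : ContDiff ℝ ∞ f) {c : ℝ} (hc : Hop α f = c • f)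
    (n : ℕ) : Hop α ((Lop α)^[n] f) = (c + 2 * n * α) • (Lop α)^[n] f := by
  induction n with
  | zero => simpa using hc
  | succ n ih =>
    have hn : ContDiff ℝ 3 ((Lop α)^[n] f) :=
      contDiff_infty.1 (contDiff_Lop_iterate hf n) 3
    rw [Function.iterate_succ_apply', Hop_Lop hn, ih, Lop_smul]
    push_cast
    module

lemma contDiff_hermiteF₀ (α : ℝ) {n : WithTop ℕ∞} : ContDiff ℝ n (hermiteF₀ α) := by
  unfold hermiteF₀
  fun_prop

lemma hasDerivAt_hermiteF₀ (α x : ℝ) :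
    HasDerivAt (hermiteF₀ α) (-(x / α) * hermiteF₀ α x) x := by
  refine ((hasDerivAt_pow 2 x).fun_neg.div_const (2 * α)).exp.congr_deriv ?_
  simp only [hermiteF₀]
  ring

lemma Kop_hermiteF₀ (hα : α ≠ 0) : Kop α (hermiteF₀ α) = 0 := by
  funext x
  simp only [Kop, (hasDerivAt_hermiteF₀ α x).deriv, Pi.zero_apply]
  field_simp
  ring

lemma Hop_hermiteF₀ (hα : α ≠ 0) : Hop α (hermiteF₀ α) = α • hermiteF₀ α := by
  have hLK : Lop α (Kop α (hermiteF₀ α)) = Hop α (hermiteF₀ α) - α • hermiteF₀ α :=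
    Lop_Kop ((contDiff_hermiteF₀ α).differentiable two_ne_zero)
      (contDiff_hermiteF₀ α).differentiable_deriv_two
  rwa [Kop_hermiteF₀ hα, Lop_zero, eq_comm, sub_eq_zero] at hLK

lemma contDiff_hermiteF (α : ℝ) (n : ℕ) : ContDiff ℝ ∞ (hermiteF α n) :=
  contDiff_Lop_iterate (contDiff_hermiteF₀ α) n

lemma Hop_hermiteF (hα : α ≠ 0) (n : ℕ) :
    Hop α (hermiteF α n) = ((2 * n + 1) * α) • hermiteF α n := by
  rw [show (2 * n + 1) * α = α + 2 * n * α by ring]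
  exact Hop_Lop_iterate_of_Hop_eq_smul (contDiff_hermiteF₀ α) (Hop_hermiteF₀ hα) n

end

theorem statement3_general (α : ℝ) (hα : α ≠ 0) (n : ℕ) :
    ContDiff ℝ (⊤ : ℕ∞) (hermiteF α n) ∧
      ∀ x : ℝ, -α ^ 2 * deriv (deriv (hermiteF α n)) x + x ^ 2 * hermiteF α n x
        = (2 * (n : ℝ) + 1) * α * hermiteF α n x :=
  ⟨contDiff_hermiteF α n, congrFun (Hop_hermiteF hα n)⟩

/-- For every `n`, the function `f_n = L^[n] f₀` is infinitely differentiable and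
satisfies the harmonic-oscillator eigenvalue equation
`−α²·f_n″(x) + x²·f_n(x) = (2n+1)·α·f_n(x)` for all `x`. -/
theorem statement3 (α : ℝ) (hα : 0 < α) (n : ℕ) :
    ContDiff ℝ (⊤ : ℕ∞) (hermiteF α n) ∧
      ∀ x : ℝ, -α ^ 2 * deriv (deriv (hermiteF α n)) x + x ^ 2 * hermiteF α n x
        = (2 * (n : ℝ) + 1) * α * hermiteF α n x :=
  statement3_general α hα.ne' n
end

section
/- For every real α > 0, the ℂ-linear span of the equivalence classes in L²(ℝ, ℂ) (with Lebesgue measure) of the functions x ↦ xⁿ·exp(−x²/(2α)), for n ∈ ℕ, is dense in L²(ℝ, ℂ). (Hence the normalized eigenfunctions p_n(x)e^{−x²/(2α)} of the harmonic oscillator form an orthonormal basis of L²(ℝ).) -/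
open MeasureTheory

/-!
If `f` is orthogonal to every `xⁿ e^{-x²/(2α)}`, then all moments of `h = e^{-x²/(2α)} f` vanish,
and `e^{c|x|} h` is integrable. Hence the positive and negative parts of the real and imaginary
parts of `h` are densities of finite measures whose complex moment generating functions are analytic
on a vertical strip around the imaginary axis. Equal moments give equal Taylor coefficients at `0`,
so the generating functions agree on the whole strip; on the imaginary axis they are the
characteristic functions, which determine the measures. Thus `h = 0`, and `f = 0` because the weight
does not vanish.
-/

open ProbabilityTheory Filter Topology

lemma eventuallyEq_of_iteratedDeriv_eq {𝕜 : Type*} [NontriviallyNormedField 𝕜] [CompleteSpace 𝕜]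
    [CharZero 𝕜] {f g : 𝕜 → 𝕜} {z : 𝕜} (hf : AnalyticAt 𝕜 f z) (hg : AnalyticAt 𝕜 g z)
    (h : ∀ n, iteratedDeriv n f z = iteratedDeriv n g z) :
    f =ᶠ[𝓝 z] g := by
  have hf' := hf.hasFPowerSeriesAt
  simp only [h] at hf'
  filter_upwards [hf'.eventually_hasSum_sub, hg.hasFPowerSeriesAt.eventually_hasSum_sub]
    with w hfw hgw using hfw.unique hgw

lemma ae_eq_zero_of_withDensity_ofReal_eq_neg {Ω : Type*} {mΩ : MeasurableSpace Ω} {μ : Measure Ω}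
    {h : Ω → ℝ} (hh : Integrable h μ)
    (heq : μ.withDensity (fun ω ↦ ENNReal.ofReal (h ω)) =
      μ.withDensity fun ω ↦ ENNReal.ofReal (-h ω)) : h =ᵐ[μ] 0 := by
  have hparts : (fun ω ↦ ENNReal.ofReal (h ω)) =ᵐ[μ] fun ω ↦ ENNReal.ofReal (-h ω) :=
    (withDensity_eq_iff hh.aemeasurable.ennreal_ofReal hh.neg.aemeasurable.ennreal_ofReal
      hh.lintegral_lt_top.ne).1 heq
  filter_upwards [hparts] with ω hω
  rcases le_total 0 (h ω) with h_nonneg | h_nonpos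
  · rw [ENNReal.ofReal_of_nonpos (neg_nonpos.2 h_nonneg), ENNReal.ofReal_eq_zero] at hω
    exact le_antisymm hω h_nonneg
  · rw [ENNReal.ofReal_of_nonpos h_nonpos, eq_comm, ENNReal.ofReal_eq_zero, neg_nonpos] at hω
    exact le_antisymm h_nonpos hω

lemma integral_withDensity_ofReal {Ω : Type*} {mΩ : MeasurableSpace Ω} {μ : Measure Ω}
    {E : Type*} [NormedAddCommGroup E] [NormedSpace ℝ E] {h : Ω → ℝ} (hh : AEMeasurable h μ)
    (g : Ω → E) :
    ∫ ω, g ω ∂(μ.withDensity fun ω ↦ ENNReal.ofReal (h ω)) = ∫ ω, max (h ω) 0 • g ω ∂μ := by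
  rw [integral_withDensity_eq_integral_toReal_smul₀ hh.ennreal_ofReal
    (ae_of_all _ fun _ ↦ ENNReal.ofReal_lt_top)]
  simp only [ENNReal.toReal_ofReal']

section Moments

variable {Ω Ω' : Type*} {mΩ : MeasurableSpace Ω} {mΩ' : MeasurableSpace Ω'}
  {μ : Measure Ω} {μ' : Measure Ω'} {X : Ω → ℝ} {Y : Ω' → ℝ}

lemma zero_mem_interior_integrableExpSet_of_integrable_exp_mul_abs {c : ℝ} (hc : 0 < c)
    (hX : AEMeasurable X μ) (h : Integrable (fun ω ↦ Real.exp (c * |X ω|)) μ) :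
    0 ∈ interior (integrableExpSet X μ) := by
  refine mem_interior.2 ⟨Set.Ioo (-c) c, fun t ht ↦ ?_, isOpen_Ioo, by simpa using hc⟩
  refine h.mono' (by fun_prop) (ae_of_all _ fun ω ↦ ?_)
  rw [Real.norm_of_nonneg (Real.exp_nonneg _), Real.exp_le_exp]
  calc t * X ω ≤ |t| * |X ω| := (le_abs_self _).trans_eq (abs_mul _ _)
    _ ≤ c * |X ω| := by gcongr; exact (abs_lt.2 ht).le

lemma isFiniteMeasure_of_zero_mem_interior_integrableExpSet
    (h : 0 ∈ interior (integrableExpSet X μ)) : IsFiniteMeasure μ := by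
  have : Integrable (fun _ ↦ (1 : ℝ)) μ := by
    simpa using integrable_of_mem_integrableExpSet (interior_subset h)
  exact (integrable_const_iff_isFiniteMeasure one_ne_zero).1 this

lemma complexMGF_eventuallyEq_of_moments_eq (hX : 0 ∈ interior (integrableExpSet X μ))
    (hY : 0 ∈ interior (integrableExpSet Y μ'))
    (h : ∀ n : ℕ, ∫ ω, X ω ^ n ∂μ = ∫ ω, Y ω ^ n ∂μ') :
    complexMGF X μ =ᶠ[𝓝 0] complexMGF Y μ' := by
  refine eventuallyEq_of_iteratedDeriv_eq (analyticAt_complexMGF (by simpa using hX))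
    (analyticAt_complexMGF (by simpa using hY)) fun n ↦ ?_
  rw [iteratedDeriv_complexMGF (by simpa using hX), iteratedDeriv_complexMGF (by simpa using hY)]
  simpa [← Complex.ofReal_pow, integral_complex_ofReal] using h n

lemma eqOn_complexMGF_of_moments_eq (hX : 0 ∈ interior (integrableExpSet X μ))
    (hY : 0 ∈ interior (integrableExpSet Y μ'))
    (h : ∀ n : ℕ, ∫ ω, X ω ^ n ∂μ = ∫ ω, Y ω ^ n ∂μ') :
    Set.EqOn (complexMGF X μ) (complexMGF Y μ')
      {z | z.re ∈ interior (integrableExpSet X μ) ∩ interior (integrableExpSet Y μ')} := by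
  have hconv : Convex ℝ (interior (integrableExpSet X μ) ∩ interior (integrableExpSet Y μ')) :=
    convex_integrableExpSet.interior.inter convex_integrableExpSet.interior
  exact AnalyticOnNhd.eqOn_of_preconnected_of_eventuallyEq
    (analyticOnNhd_complexMGF.mono fun _ hz ↦ hz.1) (analyticOnNhd_complexMGF.mono fun _ hz ↦ hz.2)
    (hconv.linear_preimage Complex.reLm).isPreconnected (z₀ := 0) (by simp [hX, hY])
    (complexMGF_eventuallyEq_of_moments_eq hX hY h)

theorem map_eq_map_of_moments_eq (hX : 0 ∈ interior (integrableExpSet X μ))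
    (hY : 0 ∈ interior (integrableExpSet Y μ'))
    (h : ∀ n : ℕ, ∫ ω, X ω ^ n ∂μ = ∫ ω, Y ω ^ n ∂μ') :
    μ.map X = μ'.map Y := by
  have := isFiniteMeasure_of_zero_mem_interior_integrableExpSet hX
  have := isFiniteMeasure_of_zero_mem_interior_integrableExpSet hY
  refine Measure.ext_of_charFun (funext fun t ↦ ?_)
  rw [← complexMGF_mul_I (aemeasurable_of_mem_interior_integrableExpSet hX),
    ← complexMGF_mul_I (aemeasurable_of_mem_interior_integrableExpSet hY)]
  exact eqOn_complexMGF_of_moments_eq hX hY h (by simp [hX, hY])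

end Moments

section ExponentialDecay

variable {μ : Measure ℝ} {c : ℝ} {E : Type*} [NormedAddCommGroup E] [NormedSpace ℝ E]

lemma aestronglyMeasurable_of_exp_mul_abs_smul {h : ℝ → E}
    (hh : AEStronglyMeasurable (fun x ↦ Real.exp (c * |x|) • h x) μ) :
    AEStronglyMeasurable h μ := by
  have hexp : AEStronglyMeasurable (fun x : ℝ ↦ Real.exp (-(c * |x|))) μ := by fun_prop
  refine (hexp.smul hh).congr (ae_of_all _ fun x ↦ ?_)
  simp [smul_smul, ← Real.exp_add]

lemma memLp_pow_smul_of_memLp_exp_mul_abs_smul {h : ℝ → E} {p : ENNReal} (hc : 0 < c)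
    (hh : MemLp (fun x ↦ Real.exp (c * |x|) • h x) p μ) (n : ℕ) :
    MemLp (fun x ↦ x ^ n • h x) p μ := by
  have hmeas := aestronglyMeasurable_of_exp_mul_abs_smul hh.aestronglyMeasurable
  refine hh.of_le_mul (c := n.factorial / c ^ n) (by fun_prop) (ae_of_all _ fun x ↦ ?_)
  have hpow : |x| ^ n ≤ n.factorial / c ^ n * Real.exp (c * |x|) := by
    have := Real.pow_div_factorial_le_exp (c * |x|) (by positivity) n
    rw [mul_pow] at this
    field_simp at this ⊢
    exact this
  rw [norm_smul, norm_smul, norm_pow, Real.norm_eq_abs, Real.norm_of_nonneg (Real.exp_nonneg _),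
    ← mul_assoc]
  gcongr

lemma integrable_pow_smul_of_integrable_exp_mul_abs_smul {h : ℝ → E} (hc : 0 < c)
    (hh : Integrable (fun x ↦ Real.exp (c * |x|) • h x) μ) (n : ℕ) :
    Integrable (fun x ↦ x ^ n • h x) μ :=
  memLp_one_iff_integrable.1
    (memLp_pow_smul_of_memLp_exp_mul_abs_smul hc (memLp_one_iff_integrable.2 hh) n)

lemma integrable_posPart_smul_pow_of_integrable_exp_mul_abs_smul {h : ℝ → ℝ} (hc : 0 < c)
    (hh : Integrable (fun x ↦ Real.exp (c * |x|) • h x) μ) (n : ℕ) :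
    Integrable (fun x ↦ max (h x) 0 • x ^ n) μ := by
  have hpos : Integrable (fun x ↦ Real.exp (c * |x|) • max (h x) 0) μ := by
    refine hh.pos_part.congr (ae_of_all _ fun x ↦ ?_)
    simp [mul_max_of_nonneg, Real.exp_nonneg]
  simpa only [smul_eq_mul, mul_comm] using
    integrable_pow_smul_of_integrable_exp_mul_abs_smul hc hpos n

lemma zero_mem_interior_integrableExpSet_withDensity_ofReal {h : ℝ → ℝ} (hc : 0 < c)
    (hh : Integrable (fun x ↦ Real.exp (c * |x|) • h x) μ) :
    0 ∈ interior (integrableExpSet id (μ.withDensity fun x ↦ ENNReal.ofReal (h x))) := by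
  have hmeas := aestronglyMeasurable_of_exp_mul_abs_smul hh.aestronglyMeasurable
  refine zero_mem_interior_integrableExpSet_of_integrable_exp_mul_abs hc aemeasurable_id ?_
  rw [integrable_withDensity_iff_integrable_smul₀' hmeas.aemeasurable.ennreal_ofReal
    (ae_of_all _ fun _ ↦ ENNReal.ofReal_lt_top)]
  refine hh.pos_part.congr (ae_of_all _ fun x ↦ ?_)
  simp [ENNReal.toReal_ofReal', max_mul_of_nonneg, Real.exp_nonneg, mul_comm]

lemma ae_eq_zero_of_moments_eq_zero_real {h : ℝ → ℝ} (hc : 0 < c)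
    (hh : Integrable (fun x ↦ Real.exp (c * |x|) • h x) μ)
    (hmom : ∀ n : ℕ, ∫ x, x ^ n • h x ∂μ = 0) : h =ᵐ[μ] 0 := by
  have hmeas : AEMeasurable h μ :=
    (aestronglyMeasurable_of_exp_mul_abs_smul hh.aestronglyMeasurable).aemeasurable
  have hmeas_neg : AEMeasurable (fun x ↦ -h x) μ := hmeas.neg
  have hh_neg : Integrable (fun x ↦ Real.exp (c * |x|) • -h x) μ := by simpa using hh.neg
  have h_integrable : Integrable h μ := by
    simpa using integrable_pow_smul_of_integrable_exp_mul_abs_smul hc hh 0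
  have hmoments (n : ℕ) : ∫ x, x ^ n ∂(μ.withDensity fun x ↦ ENNReal.ofReal (h x)) =
      ∫ x, x ^ n ∂(μ.withDensity fun x ↦ ENNReal.ofReal (-h x)) := by
    have hpos := integrable_posPart_smul_pow_of_integrable_exp_mul_abs_smul hc hh n
    have hneg := integrable_posPart_smul_pow_of_integrable_exp_mul_abs_smul hc hh_neg n
    rw [integral_withDensity_ofReal hmeas, integral_withDensity_ofReal hmeas_neg,
      ← sub_eq_zero, ← integral_sub hpos hneg]
    simp only [← sub_smul, max_zero_sub_max_neg_zero_eq_self]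
    simpa only [smul_eq_mul, mul_comm] using hmom n
  refine ae_eq_zero_of_withDensity_ofReal_eq_neg h_integrable ?_
  simpa using map_eq_map_of_moments_eq
    (zero_mem_interior_integrableExpSet_withDensity_ofReal hc hh)
    (zero_mem_interior_integrableExpSet_withDensity_ofReal hc hh_neg) hmoments

theorem ae_eq_zero_of_moments_eq_zero [CompleteSpace E] {h : ℝ → E} (hc : 0 < c)
    (hh : Integrable (fun x ↦ Real.exp (c * |x|) • h x) μ)
    (hmom : ∀ n : ℕ, ∫ x, x ^ n • h x ∂μ = 0) : h =ᵐ[μ] 0 := by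
  obtain ⟨s, hs, hhs⟩ :=
    (aestronglyMeasurable_of_exp_mul_abs_smul hh.aestronglyMeasurable).isSeparable_ae_range
  refine ae_eq_zero_of_forall_dual_of_isSeparable ℝ hs (fun φ ↦ ?_) hhs
  refine ae_eq_zero_of_moments_eq_zero_real hc ?_ fun n ↦ ?_
  · simpa using φ.integrable_comp hh
  · simpa [hmom n] using
      φ.integral_comp_comm (integrable_pow_smul_of_integrable_exp_mul_abs_smul hc hh n)

theorem dense_span_pow_smul {𝕜 : Type*} [RCLike 𝕜] {w : ℝ → 𝕜} (hc : 0 < c)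
    (hw : MemLp (fun x ↦ Real.exp (c * |x|) • w x) 2 μ) (hw0 : ∀ᵐ x ∂μ, w x ≠ 0) :
    Dense (Submodule.span 𝕜 {g : Lp 𝕜 2 μ | ∃ n : ℕ, g =ᵐ[μ] fun x ↦ x ^ n • w x} :
      Set (Lp 𝕜 2 μ)) := by
  rw [Submodule.dense_iff_topologicalClosure_eq_top, Submodule.topologicalClosure_eq_top_iff,
    Submodule.eq_bot_iff]
  intro f hf
  have hinner : Integrable (fun x ↦ Real.exp (c * |x|) • inner 𝕜 (w x) (f x)) μ := by
    refine (L2.integrable_inner (𝕜 := 𝕜) (hw.toLp _) f).congr ?_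
    filter_upwards [hw.coeFn_toLp] with x hx
    rw [hx, inner_smul_left_eq_smul]
  have hmom (n : ℕ) : ∫ x, x ^ n • inner 𝕜 (w x) (f x) ∂μ = 0 := by
    have hn := memLp_pow_smul_of_memLp_exp_mul_abs_smul hc hw n
    rw [← (Submodule.mem_orthogonal _ f).1 hf (hn.toLp _)
      (Submodule.subset_span ⟨n, hn.coeFn_toLp⟩), L2.inner_def]
    refine integral_congr_ae ?_
    filter_upwards [hn.coeFn_toLp] with x hx
    rw [hx, inner_smul_left_eq_smul]
  rw [Lp.eq_zero_iff_ae_eq_zero]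
  filter_upwards [ae_eq_zero_of_moments_eq_zero hc hinner hmom, hw0] with x hx hwx
  simpa [hwx] using hx

end ExponentialDecay

lemma integrable_exp_mul_abs_sub_mul_sq {b : ℝ} (hb : 0 < b) (c : ℝ) :
    Integrable fun x : ℝ ↦ Real.exp (c * |x| - b * x ^ 2) := by
  refine ((integrable_exp_neg_mul_sq (half_pos hb)).const_mul (Real.exp (c ^ 2 / (2 * b)))).mono'
    (by fun_prop) (ae_of_all _ fun x ↦ ?_)
  rw [Real.norm_of_nonneg (Real.exp_nonneg _), ← Real.exp_add, Real.exp_le_exp]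
  have hsq : c ^ 2 / (2 * b) + -(b / 2) * x ^ 2 - (c * |x| - b * x ^ 2)
      = (b * |x| - c) ^ 2 / (2 * b) := by
    rw [← sq_abs x]
    field_simp
    ring
  have : 0 ≤ (b * |x| - c) ^ 2 / (2 * b) := by positivity
  linarith

lemma memLp_two_exp_mul_abs_smul_exp_neg_mul_sq {b : ℝ} (hb : 0 < b) (c : ℝ) :
    MemLp (fun x : ℝ ↦ Real.exp (c * |x|) • (Real.exp (-b * x ^ 2) : ℂ)) 2 := by
  rw [memLp_two_iff_integrable_sq_norm (by fun_prop)]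
  refine (integrable_exp_mul_abs_sub_mul_sq (mul_pos two_pos hb) (2 * c)).congr
    (ae_of_all _ fun x ↦ ?_)
  simp only [norm_smul, Complex.norm_real, Real.norm_of_nonneg (Real.exp_nonneg _),
    ← Real.exp_add, ← Real.exp_nat_mul]
  congr 1
  push_cast
  ring

/-- For every `α > 0`, the `ℂ`-linear span of the `L²`-classes of the functions
`x ↦ xⁿ·exp(−x²/(2α))`, `n ∈ ℕ`, is dense in `L²(ℝ, ℂ)`. -/
theorem statement10 (α : ℝ) (hα : 0 < α) :
    Dense (↑(Submodule.span ℂ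
      {g : Lp ℂ 2 (volume : Measure ℝ) |
        ∃ n : ℕ, (g : ℝ → ℂ) =ᵐ[volume]
          fun x : ℝ => (x : ℂ) ^ n * Real.exp (-(x ^ 2) / (2 * α))}) :
      Set (Lp ℂ 2 (volume : Measure ℝ))) := by
  have hweight (x : ℝ) : -(2 * α)⁻¹ * x ^ 2 = -(x ^ 2) / (2 * α) := by ring
  have hmem := memLp_two_exp_mul_abs_smul_exp_neg_mul_sq (inv_pos.2 (mul_pos two_pos hα)) 1
  simp only [hweight] at hmem
  simpa only [Complex.real_smul, Complex.ofReal_pow] using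
    dense_span_pow_smul one_pos hmem (ae_of_all _ fun x ↦ by simp)
end

section
/- For every real α > 0, the set of equivalence classes in L²(ℝ, ℂ) (Lebesgue measure) of the functions x ↦ −α²·f″(x) + x²·f(x) + i·f(x), where f ranges over infinitely differentiable functions ℝ → ℂ with compact support, is dense in L²(ℝ, ℂ); the same holds with −i in place of +i. (That is, the harmonic oscillator H = α²Δ + x², defined on the test functions C_c^∞(ℝ), is essentially selfadjoint: H ± i have dense ranges.) -/
open MeasureTheory

open Filter Topology
open scoped ContDiff Distributions FourierTransform InnerProductSpace

/-!
If `v ∈ L²` annihilates `(H + c) f` for every test function `f`, then a cutoff argument extends this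
to the functions `φₙ x = xⁿ exp (-x² / (2α))`. Since
`(H + c) φₙ = (α (2n + 1) + c) φₙ - α² n (n - 1) φₙ₋₂`, all the moments of
`x ↦ exp (-x² / (2α)) v x` vanish by induction, as long as `-c` is none of the eigenvalues
`α (2n + 1)` of `H`. Because of the Gaussian weight the moments determine the Fourier transform,
so `v = 0`.
-/

section FourierUniqueness

variable {V E : Type*} [NormedAddCommGroup V] [InnerProductSpace ℝ V] [FiniteDimensional ℝ V]
  [MeasurableSpace V] [BorelSpace V] [NormedAddCommGroup E] [NormedSpace ℂ E] [CompleteSpace E]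

theorem integral_schwartz_smul_eq_zero_of_fourier_eq_zero {w : V → E} (hw : Integrable w)
    (hFw : 𝓕 w = 0) (φ : SchwartzMap V ℂ) : ∫ x, φ x • w x = 0 := by
  obtain ⟨ψ, rfl⟩ : ∃ ψ : SchwartzMap V ℂ, 𝓕 ψ = φ :=
    ⟨𝓕⁻ φ, FourierTransform.fourier_fourierInv_eq φ⟩
  calc ∫ x, (𝓕 ψ : SchwartzMap V ℂ) x • w x = ∫ x, ψ x • 𝓕 w x := by
        rw [SchwartzMap.fourier_coe]
        simpa only [flip_innerₗ] using! VectorFourier.integral_fourierIntegral_smul_eq_flip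
          (L := innerₗ V) Real.continuous_fourierChar continuous_inner ψ.integrable hw
    _ = 0 := by simp [hFw]

theorem ae_eq_zero_of_fourier_eq_zero {w : V → E} (hw : Integrable w) (hFw : 𝓕 w = 0) :
    ∀ᵐ x, w x = 0 := by
  refine ae_eq_zero_of_integral_contDiff_smul_eq_zero hw.locallyIntegrable fun g hg hg_supp => ?_
  have hg_supp' : HasCompactSupport (fun x => (g x : ℂ)) :=
    hg_supp.comp_left (g := ((↑) : ℝ → ℂ)) Complex.ofReal_zero
  simpa using! integral_schwartz_smul_eq_zero_of_fourier_eq_zero hw hFw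
    (hg_supp'.toSchwartzMap (Complex.ofRealCLM.contDiff.comp hg))

end FourierUniqueness

section Moments

variable {E : Type*} [NormedAddCommGroup E] [NormedSpace ℂ E] {w : ℝ → E}

theorem integral_cexp_smul_eq_zero_of_moments_eq_zero {μ : Measure ℝ}
    (hw : ∀ t : ℝ, Integrable (fun x => (Real.exp (t * |x|) : ℂ) • w x) μ)
    (hmoment : ∀ n : ℕ, ∫ x : ℝ, (x : ℂ) ^ n • w x ∂μ = 0) (z : ℂ) :
    ∫ x : ℝ, Complex.exp (z * x) • w x ∂μ = 0 := by
  have hw_meas : AEStronglyMeasurable w μ := by simpa using (hw 0).aestronglyMeasurable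
  have hbound (x : ℝ) : HasSum (fun n : ℕ => (‖z‖ * |x|) ^ n / n.factorial * ‖w x‖)
      (Real.exp (‖z‖ * |x|) * ‖w x‖) := by
    rw [Real.exp_eq_exp_ℝ]
    exact (NormedSpace.expSeries_div_hasSum_exp (‖z‖ * |x|)).mul_right ‖w x‖
  have hsum : HasSum (fun n : ℕ => ∫ x : ℝ, ((z * x) ^ n / n.factorial) • w x ∂μ)
      (∫ x : ℝ, Complex.exp (z * x) • w x ∂μ) := by
    refine hasSum_integral_of_dominated_convergence
      (fun n x => (‖z‖ * |x|) ^ n / n.factorial * ‖w x‖) (fun n => ?_) (fun n => ?_) ?_ ?_ ?_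
    · exact AEStronglyMeasurable.smul (by fun_prop) hw_meas
    · exact .of_forall fun x => by simp [norm_smul]
    · exact .of_forall fun x => (hbound x).summable
    · simp only [(hbound _).tsum_eq]
      simpa only [norm_smul, Complex.norm_real, Real.norm_of_nonneg (Real.exp_nonneg _)]
        using (hw ‖z‖).norm
    · refine .of_forall fun x => ?_
      rw [Complex.exp_eq_exp_ℂ]
      exact (NormedSpace.expSeries_div_hasSum_exp (z * x)).smul_const (w x)
  have hterm (n : ℕ) : ∫ x : ℝ, ((z * x) ^ n / n.factorial) • w x ∂μ = 0 := by
    simp only [mul_pow, mul_div_right_comm, mul_smul, integral_smul, hmoment, smul_zero]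
  simp only [hterm] at hsum
  exact hsum.unique hasSum_zero

theorem ae_eq_zero_of_moments_eq_zero_s11 [CompleteSpace E]
    (hw : ∀ t : ℝ, Integrable (fun x => (Real.exp (t * |x|) : ℂ) • w x))
    (hmoment : ∀ n : ℕ, ∫ x : ℝ, (x : ℂ) ^ n • w x = 0) : ∀ᵐ x, w x = 0 := by
  refine ae_eq_zero_of_fourier_eq_zero (by simpa using hw 0) (funext fun ξ => ?_)
  rw [Real.fourier_real_eq_integral_exp_smul, Pi.zero_apply,
    ← integral_cexp_smul_eq_zero_of_moments_eq_zero hw hmoment (-2 * Real.pi * ξ * Complex.I)]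
  congr! 4
  push_cast
  ring

end Moments

section Cutoff

theorem exists_norm_le_norm_deriv_le {f : ℝ → ℂ} (hf : ContDiff ℝ 2 f)
    (hf_supp : HasCompactSupport f) :
    ∃ C, ∀ x, ‖f x‖ ≤ C ∧ ‖deriv f x‖ ≤ C ∧ ‖deriv (deriv f) x‖ ≤ C := by
  obtain ⟨C₀, hC₀⟩ := hf.continuous.bounded_above_of_compact_support hf_supp
  obtain ⟨C₁, hC₁⟩ :=
    (hf.iterate_deriv' 1 1).continuous.bounded_above_of_compact_support hf_supp.deriv
  obtain ⟨C₂, hC₂⟩ :=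
    (hf.iterate_deriv' 0 2).continuous.bounded_above_of_compact_support hf_supp.deriv.deriv
  exact ⟨max C₀ (max C₁ C₂), fun x => ⟨(hC₀ x).trans (by simp), (hC₁ x).trans (by simp),
    (hC₂ x).trans (by simp)⟩⟩

theorem exists_smooth_cutoff_seq : ∃ (χ : ℕ → ℝ → ℂ) (C : ℝ),
    (∀ k, ContDiff ℝ ∞ (χ k)) ∧ (∀ k, HasCompactSupport (χ k)) ∧
      (∀ k x, ‖χ k x‖ ≤ C ∧ ‖deriv (χ k) x‖ ≤ C ∧ ‖deriv (deriv (χ k)) x‖ ≤ C) ∧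
        ∀ x, ∀ᶠ k in atTop, χ k =ᶠ[𝓝 x] 1 := by
  let bump : ContDiffBump (0 : ℝ) := ⟨1, 2, by norm_num, by norm_num⟩
  let ψ : ℝ → ℂ := fun x => bump x
  let r : ℕ → ℝ := fun k => 1 / ((k : ℝ) + 1)
  have hr_pos (k : ℕ) : 0 < r k := Nat.one_div_pos_of_nat
  have hr_le (k : ℕ) : ‖r k‖ ≤ 1 := by
    rw [Real.norm_of_nonneg (hr_pos k).le]
    exact (Nat.one_div_le_one_div k.zero_le).trans_eq (by simp)
  have hψ : ContDiff ℝ ∞ ψ := Complex.ofRealCLM.contDiff.comp bump.contDiff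
  have hψ_supp : HasCompactSupport ψ :=
    bump.hasCompactSupport.comp_left (g := ((↑) : ℝ → ℂ)) Complex.ofReal_zero
  obtain ⟨C, hC⟩ := exists_norm_le_norm_deriv_le (contDiff_infty.1 hψ 2) hψ_supp
  have hderiv (k : ℕ) : deriv (fun x => ψ (r k * x)) = fun x => r k • deriv ψ (r k * x) :=
    funext fun x => deriv_comp_mul_left (r k) ψ x
  have hderiv₂ (k : ℕ) (x : ℝ) : deriv (deriv fun x => ψ (r k * x)) x =
      r k • r k • deriv (deriv ψ) (r k * x) := by
    rw [hderiv, deriv_fun_const_smul_field, deriv_comp_mul_left]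
  have hsmul_le (k : ℕ) (y : ℂ) : ‖r k • y‖ ≤ ‖y‖ := by
    rw [norm_smul]
    exact mul_le_of_le_one_left (norm_nonneg y) (hr_le k)
  refine ⟨fun k x => ψ (r k * x), C, fun k => hψ.comp (by fun_prop),
    fun k => hψ_supp.comp_homeomorph (Homeomorph.mulLeft₀ (r k) (hr_pos k).ne'),
    fun k x => ⟨(hC _).1, ?_, ?_⟩, fun x => ?_⟩
  · rw [hderiv]
    exact (hsmul_le k _).trans (hC _).2.1
  · rw [hderiv₂]
    exact (hsmul_le k _).trans ((hsmul_le k _).trans (hC _).2.2)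
  · have hlim : Tendsto (fun k => r k * x) atTop (𝓝 0) := by
      simpa [r] using (tendsto_one_div_add_atTop_nhds_zero_nat (𝕜 := ℝ)).mul_const x
    filter_upwards [hlim.eventually (Metric.ball_mem_nhds 0 one_pos)] with k hk
    have hcont : Continuous fun y => r k * y := by fun_prop
    filter_upwards [hcont.continuousAt.eventually (Metric.isOpen_ball.mem_nhds hk)] with y hy
    simp [ψ, bump.one_of_mem_closedBall (Metric.ball_subset_closedBall hy)]

end Cutoff

/-- The second-order differential operator `f ↦ a f″ + V f` on functions of a real variable, where
`V` is a complex-valued potential. -/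
noncomputable def schrodingerOp (a : ℂ) (V f : ℝ → ℂ) (x : ℝ) : ℂ :=
  a * deriv (deriv f) x + V x * f x

section SchrodingerOp

variable {μ : Measure ℝ} {a : ℂ} {V v f g : ℝ → ℂ}

theorem schrodingerOp_congr {x : ℝ} (h : f =ᶠ[𝓝 x] g) :
    schrodingerOp a V f x = schrodingerOp a V g x := by
  simp only [schrodingerOp, h.eq_of_nhds, h.deriv.deriv_eq]

theorem schrodingerOp_add (hf : ContDiff ℝ 2 f) (hg : ContDiff ℝ 2 g) :
    schrodingerOp a V (f + g) = schrodingerOp a V f + schrodingerOp a V g := by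
  have hderiv : deriv (f + g) = deriv f + deriv g := funext fun x =>
    deriv_add (hf.differentiable two_ne_zero x) (hg.differentiable two_ne_zero x)
  funext x
  simp only [schrodingerOp, Pi.add_apply, hderiv,
    deriv_add (hf.differentiable_deriv_two x) (hg.differentiable_deriv_two x)]
  ring

theorem schrodingerOp_const_smul (k : ℂ) (f : ℝ → ℂ) :
    schrodingerOp a V (k • f) = k • schrodingerOp a V f := by
  have hderiv : deriv (k • f) = k • deriv f := funext fun x => deriv_const_smul_field k f
  funext x
  simp only [schrodingerOp, Pi.smul_apply, hderiv, deriv_const_smul_field, smul_eq_mul]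
  ring

theorem schrodingerOp_mul (hf : ContDiff ℝ 2 f) (hg : ContDiff ℝ 2 g) (x : ℝ) :
    schrodingerOp a V (f * g) x = f x * schrodingerOp a V g x +
      a * (2 * deriv f x * deriv g x + deriv (deriv f) x * g x) := by
  have hf₁ : Differentiable ℝ f := hf.differentiable two_ne_zero
  have hg₁ : Differentiable ℝ g := hg.differentiable two_ne_zero
  have hf₂ : Differentiable ℝ (deriv f) := hf.differentiable_deriv_two
  have hg₂ : Differentiable ℝ (deriv g) := hg.differentiable_deriv_two
  have hderiv : deriv (f * g) = deriv f * g + f * deriv g := funext fun y =>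
    deriv_mul (hf₁ y) (hg₁ y)
  simp only [schrodingerOp, hderiv, Pi.mul_apply, deriv_add ((hf₂ x).mul (hg₁ x))
    ((hf₁ x).mul (hg₂ x)), deriv_mul (hf₂ x) (hg₁ x), deriv_mul (hf₁ x) (hg₂ x)]
  ring

theorem continuous_schrodingerOp (hV : Continuous V) (hf : ContDiff ℝ 2 f) :
    Continuous (schrodingerOp a V f) :=
  (continuous_const.mul (hf.iterate_deriv' 0 2).continuous).add (hV.mul hf.continuous)

theorem hasCompactSupport_schrodingerOp (hf : HasCompactSupport f) :
    HasCompactSupport (schrodingerOp a V f) :=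
  hf.deriv.deriv.mul_left.add hf.mul_left

theorem memLp_schrodingerOp [IsFiniteMeasureOnCompacts μ] {p : ENNReal} (hV : Continuous V)
    (hf : ContDiff ℝ 2 f) (hf_supp : HasCompactSupport f) : MemLp (schrodingerOp a V f) p μ :=
  (continuous_schrodingerOp hV hf).memLp_of_hasCompactSupport
    (hasCompactSupport_schrodingerOp hf_supp)

/-- The operator `f ↦ a f″ + V f` with a continuous potential, as a linear map from the test
functions to `L²(μ)`. -/
noncomputable def schrodingerToL2 (μ : Measure ℝ) [IsFiniteMeasureOnCompacts μ] (a : ℂ)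
    (hV : Continuous V) : 𝓓((⊤ : TopologicalSpace.Opens ℝ), ℂ) →ₗ[ℂ] Lp ℂ 2 μ where
  toFun f := (memLp_schrodingerOp hV (contDiff_infty.1 f.contDiff 2) f.hasCompactSupport).toLp
    (schrodingerOp a V f)
  map_add' f g := by
    rw [← MemLp.toLp_add]
    congr 1
    exact schrodingerOp_add (contDiff_infty.1 f.contDiff 2) (contDiff_infty.1 g.contDiff 2)
  map_smul' k f := by
    rw [RingHom.id_apply, ← MemLp.toLp_const_smul]
    congr 1
    exact schrodingerOp_const_smul k f

theorem coeFn_schrodingerToL2 [IsFiniteMeasureOnCompacts μ] (hV : Continuous V)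
    (f : 𝓓((⊤ : TopologicalSpace.Opens ℝ), ℂ)) :
    schrodingerToL2 μ a hV f =ᵐ[μ] schrodingerOp a V f :=
  (memLp_schrodingerOp hV (contDiff_infty.1 f.contDiff 2) f.hasCompactSupport).coeFn_toLp

theorem denseRange_schrodingerToL2 [IsFiniteMeasureOnCompacts μ] (hV : Continuous V)
    (h : ∀ v : ℝ → ℂ, MemLp v 2 μ →
      (∀ f : ℝ → ℂ, ContDiff ℝ ∞ f → HasCompactSupport f →
        ∫ x, schrodingerOp a V f x * v x ∂μ = 0) → ∀ᵐ x ∂μ, v x = 0) :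
    DenseRange (schrodingerToL2 μ a hV) := by
  suffices (schrodingerToL2 μ a hV).range.topologicalClosure = ⊤ by
    simpa only [DenseRange, LinearMap.coe_range] using
      Submodule.dense_iff_topologicalClosure_eq_top.2 this
  rw [Submodule.topologicalClosure_eq_top_iff, Submodule.eq_bot_iff]
  intro u hu
  have hstar : ∀ᵐ x ∂μ, star (u x) = 0 := by
    refine h (fun x => star (u x)) (Lp.memLp u).star fun f hf hf_supp => ?_
    obtain ⟨η, rfl⟩ : ∃ η : 𝓓((⊤ : TopologicalSpace.Opens ℝ), ℂ), ⇑η = f :=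
      ⟨⟨f, hf, hf_supp, Set.subset_univ _⟩, rfl⟩
    have horth : ⟪u, schrodingerToL2 μ a hV η⟫_ℂ = 0 :=
      (Submodule.mem_orthogonal' _ u).1 hu _ ⟨η, rfl⟩
    rw [← horth, L2.inner_def]
    refine integral_congr_ae ?_
    filter_upwards [coeFn_schrodingerToL2 (a := a) hV η] with x hx
    simp [hx]
  refine (Lp.eq_zero_iff_ae_eq_zero).2 ?_
  filter_upwards [hstar] with x hx using star_eq_zero.1 hx

theorem integral_schrodingerOp_mul_eq_zero (hf : ContDiff ℝ 2 f)
    (hv : ∀ χ : ℝ → ℂ, ContDiff ℝ ∞ χ → HasCompactSupport χ →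
      ∫ x, schrodingerOp a V (χ * f) x * v x ∂μ = 0)
    (hfv : Integrable (fun x => f x * v x) μ) (hfv' : Integrable (fun x => deriv f x * v x) μ)
    (hSfv : Integrable (fun x => schrodingerOp a V f x * v x) μ) :
    ∫ x, schrodingerOp a V f x * v x ∂μ = 0 := by
  obtain ⟨χ, C, hχ, hχ_supp, hχ_le, hχ_one⟩ := exists_smooth_cutoff_seq
  have hleibniz (k : ℕ) (x : ℝ) : schrodingerOp a V (χ k * f) x * v x =
      χ k x * (schrodingerOp a V f x * v x) + a * (2 * deriv (χ k) x * (deriv f x * v x) +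
        deriv (deriv (χ k)) x * (f x * v x)) := by
    rw [schrodingerOp_mul (contDiff_infty.1 (hχ k) 2) hf]
    ring
  have hlim : Tendsto (fun k => ∫ x, schrodingerOp a V (χ k * f) x * v x ∂μ) atTop
      (𝓝 (∫ x, schrodingerOp a V f x * v x ∂μ)) := by
    refine tendsto_integral_of_dominated_convergence
      (fun x => C * ‖schrodingerOp a V f x * v x‖ +
        ‖a‖ * (2 * C * ‖deriv f x * v x‖ + C * ‖f x * v x‖))
      (fun k => ?_) ?_ (fun k => .of_forall fun x => ?_) (.of_forall fun x => ?_)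
    · have hχ₀ := (hχ k).continuous
      have hχ₁ : Continuous (deriv (χ k)) := ((hχ k).iterate_deriv 1).continuous
      have hχ₂ : Continuous (deriv (deriv (χ k))) := ((hχ k).iterate_deriv 2).continuous
      simp only [hleibniz]
      have := hfv.1
      have := hfv'.1
      have := hSfv.1
      fun_prop
    · exact (hSfv.norm.const_mul _).add
        (((hfv'.norm.const_mul _).add (hfv.norm.const_mul _)).const_mul _)
    · obtain ⟨hC₀, hC₁, hC₂⟩ := hχ_le k x
      rw [hleibniz]
      grw [norm_add_le, norm_mul, norm_mul a, norm_add_le, norm_mul (2 * _), norm_mul 2,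
        norm_mul (deriv (deriv _) _), hC₀, hC₁, hC₂, Complex.norm_two]
    · refine tendsto_const_nhds.congr' ?_
      filter_upwards [hχ_one x] with k hk
      have hχf : χ k * f =ᶠ[𝓝 x] f := by simpa using hk.mul (EventuallyEq.refl (𝓝 x) f)
      rw [schrodingerOp_congr hχf]
  simp only [hv _ (hχ _) (hχ_supp _)] at hlim
  exact tendsto_nhds_unique hlim tendsto_const_nhds

end SchrodingerOp

/-- The function `xⁿ exp (-b x²)`, complex-valued. For `b = 1 / (2α)` these functions span the same
space as the Hermite functions of the oscillator. -/
noncomputable def gaussianMonomial (b : ℝ) (n : ℕ) (x : ℝ) : ℂ :=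
  (x : ℂ) ^ n * Complex.exp (-b * (x : ℂ) ^ 2)

section GaussianMonomial

variable {b : ℝ} {n : ℕ}

theorem contDiff_gaussianMonomial : ContDiff ℝ ∞ (gaussianMonomial b n) := by
  have : ContDiff ℝ ∞ ((↑) : ℝ → ℂ) := Complex.ofRealCLM.contDiff
  unfold gaussianMonomial
  fun_prop

theorem pow_mul_gaussianMonomial (m : ℕ) (x : ℝ) :
    (x : ℂ) ^ m * gaussianMonomial b n x = gaussianMonomial b (m + n) x := by
  simp only [gaussianMonomial]
  ring

theorem deriv_gaussianMonomial : deriv (gaussianMonomial b n) = fun x =>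
    n * gaussianMonomial b (n - 1) x - 2 * b * gaussianMonomial b (n + 1) x := by
  funext x
  have hx : HasDerivAt ((↑) : ℝ → ℂ) 1 x := Complex.ofRealCLM.hasDerivAt
  refine ((hx.pow n).mul ((hx.pow 2).const_mul (-b : ℂ)).cexp).deriv.trans ?_
  simp only [gaussianMonomial, Pi.pow_apply]
  push_cast
  ring

theorem norm_gaussianMonomial (x : ℝ) :
    ‖gaussianMonomial b n x‖ = |x| ^ n * Real.exp (-b * x ^ 2) := by
  rw [gaussianMonomial, norm_mul, norm_pow, Complex.norm_real, Real.norm_eq_abs,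
    norm_cexp_neg_mul_sq, Complex.ofReal_re]

theorem memLp_gaussianMonomial (hb : 0 < b) : MemLp (gaussianMonomial b n) 2 := by
  rw [memLp_two_iff_integrable_sq_norm contDiff_gaussianMonomial.continuous.aestronglyMeasurable]
  have hn : (-1 : ℝ) < (2 * n : ℕ) := neg_one_lt_zero.trans_le (Nat.cast_nonneg _)
  refine (integrable_rpow_mul_exp_neg_mul_sq (mul_pos two_pos hb) hn).congr (.of_forall fun x => ?_)
  simp only [norm_gaussianMonomial, Real.rpow_natCast]
  rw [mul_pow, ← pow_mul, mul_comm n 2, (even_two_mul n).pow_abs, ← Real.exp_nat_mul]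
  congr 2
  push_cast
  ring

theorem memLp_exp_mul_abs_mul_gaussianMonomial_zero (hb : 0 < b) (t : ℝ) :
    MemLp (fun x => (Real.exp (t * |x|) : ℂ) * gaussianMonomial b 0 x) 2 := by
  have hcont : Continuous (gaussianMonomial b 0) := contDiff_gaussianMonomial.continuous
  refine (memLp_gaussianMonomial (n := 0) (half_pos hb)).of_le_mul
    (c := Real.exp (t ^ 2 / (2 * b))) (by fun_prop) (.of_forall fun x => ?_)
  have hsq : t * |x| + -b * x ^ 2 ≤ t ^ 2 / (2 * b) + -(b / 2) * x ^ 2 := by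
    have : 0 ≤ b / 2 * (|x| - t / b) ^ 2 := by positivity
    rw [← sq_abs x]
    field_simp at this ⊢
    linarith
  rw [norm_mul, Complex.norm_real, Real.norm_of_nonneg (Real.exp_nonneg _), norm_gaussianMonomial,
    norm_gaussianMonomial, pow_zero, one_mul, one_mul, ← Real.exp_add, ← Real.exp_add]
  exact Real.exp_le_exp.2 hsq

theorem deriv_deriv_gaussianMonomial (x : ℝ) : deriv (deriv (gaussianMonomial b n)) x =
    n * (n - 1 : ℕ) * gaussianMonomial b (n - 2) x -
      2 * b * (2 * n + 1) * gaussianMonomial b n x + 4 * b ^ 2 * gaussianMonomial b (n + 2) x := by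
  have hdiff (m : ℕ) : Differentiable ℝ (gaussianMonomial b m) :=
    contDiff_gaussianMonomial.differentiable (by simp)
  have hsub : deriv (deriv (gaussianMonomial b n)) x =
      n * deriv (gaussianMonomial b (n - 1)) x - 2 * b * deriv (gaussianMonomial b (n + 1)) x := by
    rw [deriv_gaussianMonomial (n := n), deriv_fun_sub ((hdiff _ x).const_mul _)
      ((hdiff _ x).const_mul _), deriv_const_mul_field, deriv_const_mul_field]
  rw [hsub, deriv_gaussianMonomial, deriv_gaussianMonomial]
  rcases n with _ | n <;> simp only [Nat.add_sub_cancel, Nat.add_assoc, Nat.reduceAdd,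
    Nat.cast_zero, Nat.cast_add, Nat.cast_one, Nat.reduceSubDiff] <;> ring

theorem schrodingerOp_gaussianMonomial {α : ℝ} (hb : 2 * α * b = 1) (c : ℂ) (n : ℕ) (x : ℝ) :
    schrodingerOp (-(α : ℂ) ^ 2) (fun x => (x : ℂ) ^ 2 + c) (gaussianMonomial b n) x =
      (α * (2 * n + 1) + c) * gaussianMonomial b n x -
        α ^ 2 * (n * (n - 1 : ℕ)) * gaussianMonomial b (n - 2) x := by
  have hb' : 2 * (α : ℂ) * b = 1 := mod_cast hb
  rw [schrodingerOp, deriv_deriv_gaussianMonomial, add_mul, pow_mul_gaussianMonomial, add_comm 2 n]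
  linear_combination (α * (2 * n + 1) * gaussianMonomial b n x -
    (1 + 2 * α * b) * gaussianMonomial b (n + 2) x) * hb'

end GaussianMonomial

section HarmonicOscillator

variable {α b : ℝ} {c : ℂ} {v : ℝ → ℂ}

theorem integral_gaussianMonomial_mul_eq_zero (hb : 0 < b) (hαb : 2 * α * b = 1)
    (hc : ∀ n : ℕ, (α : ℂ) * (2 * n + 1) + c ≠ 0) (hv : MemLp v 2)
    (horth : ∀ f : ℝ → ℂ, ContDiff ℝ ∞ f → HasCompactSupport f →
      ∫ x, schrodingerOp (-(α : ℂ) ^ 2) (fun x => (x : ℂ) ^ 2 + c) f x * v x = 0) (n : ℕ) :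
    ∫ x, gaussianMonomial b n x * v x = 0 := by
  have hint (m : ℕ) : Integrable (fun x => gaussianMonomial b m x * v x) :=
    (memLp_gaussianMonomial hb).integrable_mul hv
  have hrec (m : ℕ) (x : ℝ) : schrodingerOp (-(α : ℂ) ^ 2) (fun x => (x : ℂ) ^ 2 + c)
      (gaussianMonomial b m) x * v x =
      (α * (2 * m + 1) + c) * (gaussianMonomial b m x * v x) -
        α ^ 2 * (m * (m - 1 : ℕ)) * (gaussianMonomial b (m - 2) x * v x) := by
    rw [schrodingerOp_gaussianMonomial hαb]
    ring
  induction n using Nat.strong_induction_on with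
  | _ n ih =>
    have hzero : ∫ x, schrodingerOp (-(α : ℂ) ^ 2) (fun x => (x : ℂ) ^ 2 + c)
        (gaussianMonomial b n) x * v x = 0 := by
      refine integral_schrodingerOp_mul_eq_zero (contDiff_infty.1 contDiff_gaussianMonomial 2)
        (fun χ hχ hχ_supp => horth _ (hχ.mul contDiff_gaussianMonomial) hχ_supp.mul_right)
        (hint n) ?_ ?_
      · simp only [deriv_gaussianMonomial, sub_mul, mul_assoc]
        exact ((hint _).const_mul _).sub (((hint _).const_mul _).const_mul _)
      · simp only [hrec]
        exact ((hint _).const_mul _).sub ((hint _).const_mul _)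
    have hprev : (α : ℂ) ^ 2 * (n * (n - 1 : ℕ)) *
        ∫ x, gaussianMonomial b (n - 2) x * v x = 0 := by
      rcases n with _ | _ | n
      · simp
      · simp
      · rw [Nat.add_sub_cancel (n := n) (m := 2), ih n (by lia), mul_zero]
    simp only [hrec] at hzero
    rw [integral_sub ((hint _).const_mul _) ((hint _).const_mul _), integral_const_mul,
      integral_const_mul, hprev, sub_zero] at hzero
    exact (mul_eq_zero.1 hzero).resolve_left (hc n)

theorem ae_eq_zero_of_integral_gaussianMonomial_mul_eq_zero (hb : 0 < b) (hv : MemLp v 2)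
    (hmoment : ∀ n, ∫ x, gaussianMonomial b n x * v x = 0) : ∀ᵐ x, v x = 0 := by
  have hprod : ∀ᵐ x, gaussianMonomial b 0 x * v x = 0 := by
    refine ae_eq_zero_of_moments_eq_zero_s11 (fun t => ?_) fun n => ?_
    · simpa only [smul_eq_mul, ← mul_assoc] using!
        (memLp_exp_mul_abs_mul_gaussianMonomial_zero hb t).integrable_mul hv
    · simpa only [smul_eq_mul, ← mul_assoc, pow_mul_gaussianMonomial, add_zero] using hmoment n
  filter_upwards [hprod] with x hx
  simpa [gaussianMonomial] using hx

theorem ofReal_mul_two_mul_add_one_add_ne_zero (hc : c.im ≠ 0) (n : ℕ) :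
    (α : ℂ) * (2 * n + 1) + c ≠ 0 :=
  fun h => hc (by simpa using congr_arg Complex.im h)

end HarmonicOscillator

theorem statement11_general {α : ℝ} (hα : 0 < α) {c : ℂ}
    (hc : ∀ n : ℕ, (α : ℂ) * (2 * n + 1) + c ≠ 0) :
    Dense {g : Lp ℂ 2 (volume : Measure ℝ) |
      ∃ f : ℝ → ℂ, ContDiff ℝ (⊤ : ℕ∞) f ∧ HasCompactSupport f ∧
        (g : ℝ → ℂ) =ᵐ[volume] fun x : ℝ =>
          -(α : ℂ) ^ 2 * deriv (deriv f) x + (x : ℂ) ^ 2 * f x + c * f x} := by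
  have hV : Continuous fun x : ℝ => (x : ℂ) ^ 2 + c := by fun_prop
  obtain ⟨b, hb, hαb⟩ : ∃ b, 0 < b ∧ 2 * α * b = 1 :=
    ⟨1 / (2 * α), by positivity, mul_one_div_cancel (by positivity)⟩
  have hdense : DenseRange (schrodingerToL2 volume (-(α : ℂ) ^ 2) hV) :=
    denseRange_schrodingerToL2 hV fun v hv horth =>
      ae_eq_zero_of_integral_gaussianMonomial_mul_eq_zero hb hv
        (integral_gaussianMonomial_mul_eq_zero hb hαb hc hv horth)
  refine hdense.mono ?_
  rintro _ ⟨f, rfl⟩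
  refine ⟨f, f.contDiff, f.hasCompactSupport, ?_⟩
  filter_upwards [coeFn_schrodingerToL2 hV f] with x hx
  rw [hx, schrodingerOp]
  ring

/-- For every `α > 0`, the set of `L²`-classes of the functions
`x ↦ −α²·f″(x) + x²·f(x) + i·f(x)`, with `f` ranging over smooth compactly supported functions
`ℝ → ℂ`, is dense in `L²(ℝ, ℂ)`; and likewise with `−i` in place of `+i`.  (The harmonic
oscillator on the test functions is essentially selfadjoint.) -/
theorem statement11 (α : ℝ) (hα : 0 < α) :
    Dense {g : Lp ℂ 2 (volume : Measure ℝ) |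
        ∃ f : ℝ → ℂ, ContDiff ℝ (⊤ : ℕ∞) f ∧ HasCompactSupport f ∧
          (g : ℝ → ℂ) =ᵐ[volume] fun x : ℝ =>
            -(α : ℂ) ^ 2 * deriv (deriv f) x + (x : ℂ) ^ 2 * f x + Complex.I * f x} ∧
      Dense {g : Lp ℂ 2 (volume : Measure ℝ) |
        ∃ f : ℝ → ℂ, ContDiff ℝ (⊤ : ℕ∞) f ∧ HasCompactSupport f ∧
          (g : ℝ → ℂ) =ᵐ[volume] fun x : ℝ =>
            -(α : ℂ) ^ 2 * deriv (deriv f) x + (x : ℂ) ^ 2 * f x - Complex.I * f x} := by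
  refine ⟨statement11_general hα (ofReal_mul_two_mul_add_one_add_ne_zero (by simp)), ?_⟩
  simpa only [neg_mul, ← sub_eq_add_neg] using
    statement11_general hα (ofReal_mul_two_mul_add_one_add_ne_zero (c := -Complex.I) (by simp))
end

section
/- Let B be a C*-algebra and let φ be a map from the 2×2 upper triangular complex matrices to B that is ℂ-linear, multiplicative (φ(M N) = φ(M)·φ(N) for all upper triangular M, N), and satisfies φ(M(conj c, conj b, conj a)) = star(φ(M(a, b, c))) for all a, b, c ∈ ℂ. Then φ(M(a, b, c)) = 0 for all a, b, c ∈ ℂ. (Hence the enveloping C*-algebra of this Banach *-algebra is 0.) -/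
/-- The upper triangular matrix `M(a, b, c) = !![a, b; 0, c]`. -/
def upperTri (a b c : ℂ) : Matrix (Fin 2) (Fin 2) ℂ := !![a, b; 0, c]

/-!
The matrix units `E₁₁ = M(1, 0, 0)` and `E₂₂ = M(0, 0, 1)` are exchanged by the involution and
satisfy `E₁₁* E₁₁ = E₂₂ E₁₁ = 0`. Since `x* x = 0` forces `x = 0` in a C*-algebra, every
*-representation kills `E₁₁`, hence also `E₂₂ = E₁₁*`, hence the unit `E₁₁ + E₂₂ = 1`.
-/

theorem nonUnitalRingHom_eq_zero_of_map_eq_star {A B : Type*} [NonAssocSemiring A]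
    [NonUnitalNonAssocSemiring B] [StarRing B] (hB : ∀ x : B, star x * x = 0 → x = 0)
    (φ : A →ₙ+* B) {e f : A} (hmul : f * e = 0) (hadd : e + f = 1)
    (hstar : φ f = star (φ e)) : φ = 0 := by
  have map_e : φ e = 0 := hB _ (by rw [← hstar, ← map_mul, hmul, map_zero])
  have map_f : φ f = 0 := by rw [hstar, map_e, star_zero]
  have map_one : φ 1 = 0 := by rw [← hadd, map_add, map_e, map_f, add_zero]
  ext x
  calc φ x = φ 1 * φ x := by rw [← map_mul, one_mul]
    _ = 0 := by rw [map_one, zero_mul]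

theorem upperTri_zero : upperTri 0 0 0 = 0 := by
  simpa [upperTri] using (Matrix.eta_fin_two (0 : Matrix (Fin 2) (Fin 2) ℂ)).symm

theorem upperTri_one : upperTri 1 0 1 = 1 := by
  simp [upperTri, Matrix.one_fin_two]

theorem upperTri_neg (a b c : ℂ) : -upperTri a b c = upperTri (-a) (-b) (-c) := by
  simp [upperTri]

theorem upperTri_add (a b c a' b' c' : ℂ) :
    upperTri a b c + upperTri a' b' c' = upperTri (a + a') (b + b') (c + c') := by
  simp [upperTri]

theorem upperTri_mul (a b c a' b' c' : ℂ) :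
    upperTri a b c * upperTri a' b' c' = upperTri (a * a') (a * b' + b * c') (c * c') := by
  simp [upperTri]

/-- The ring of upper triangular matrices, the domain of the representations under consideration.
Membership is encoded as being of the form `upperTri a b c`. -/
def upperTriSubring : Subring (Matrix (Fin 2) (Fin 2) ℂ) where
  carrier := {M | ∃ a b c, upperTri a b c = M}
  zero_mem' := ⟨0, 0, 0, upperTri_zero⟩
  one_mem' := ⟨1, 0, 1, upperTri_one⟩
  neg_mem' := by
    rintro _ ⟨a, b, c, rfl⟩
    exact ⟨_, _, _, (upperTri_neg a b c).symm⟩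
  add_mem' := by
    rintro _ _ ⟨a, b, c, rfl⟩ ⟨a', b', c', rfl⟩
    exact ⟨_, _, _, (upperTri_add a b c a' b' c').symm⟩
  mul_mem' := by
    rintro _ _ ⟨a, b, c, rfl⟩ ⟨a', b', c', rfl⟩
    exact ⟨_, _, _, (upperTri_mul a b c a' b' c').symm⟩

theorem upperTri_mem_upperTriSubring (a b c : ℂ) : upperTri a b c ∈ upperTriSubring :=
  ⟨a, b, c, rfl⟩

/-- The ring homomorphism on upper triangular matrices given by a map which is additive and
multiplicative on them; the values of `φ` at other matrices are discarded. -/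
def upperTriSubringHom {B : Type*} [NonUnitalNonAssocRing B]
    (φ : Matrix (Fin 2) (Fin 2) ℂ → B)
    (hadd : ∀ a b c a' b' c' : ℂ,
      φ (upperTri a b c + upperTri a' b' c') = φ (upperTri a b c) + φ (upperTri a' b' c'))
    (hmul : ∀ a b c a' b' c' : ℂ,
      φ (upperTri a b c * upperTri a' b' c') = φ (upperTri a b c) * φ (upperTri a' b' c')) :
    upperTriSubring →ₙ+* B where
  toFun M := φ M
  map_zero' := by simpa [upperTri_zero] using hadd 0 0 0 0 0 0
  map_add' := by
    rintro ⟨_, a, b, c, rfl⟩ ⟨_, a', b', c', rfl⟩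
    exact hadd a b c a' b' c'
  map_mul' := by
    rintro ⟨_, a, b, c, rfl⟩ ⟨_, a', b', c', rfl⟩
    exact hmul a b c a' b' c'

theorem statement14_general {B : Type*} [NonUnitalNonAssocRing B] [StarRing B]
    (hB : ∀ x : B, star x * x = 0 → x = 0)
    (φ : Matrix (Fin 2) (Fin 2) ℂ → B)
    (hadd : ∀ a b c a' b' c' : ℂ,
      φ (upperTri a b c + upperTri a' b' c') = φ (upperTri a b c) + φ (upperTri a' b' c'))
    (hmul : ∀ a b c a' b' c' : ℂ,
      φ (upperTri a b c * upperTri a' b' c') = φ (upperTri a b c) * φ (upperTri a' b' c'))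
    (hstar : ∀ a b c : ℂ,
      φ (upperTri (starRingEnd ℂ c) (starRingEnd ℂ b) (starRingEnd ℂ a))
        = star (φ (upperTri a b c))) (a b c : ℂ) :
    φ (upperTri a b c) = 0 := by
  let e : upperTriSubring := ⟨upperTri 1 0 0, upperTri_mem_upperTriSubring 1 0 0⟩
  let f : upperTriSubring := ⟨upperTri 0 0 1, upperTri_mem_upperTriSubring 0 0 1⟩
  let ψ := upperTriSubringHom φ hadd hmul
  have f_mul_e : f * e = 0 := Subtype.ext (by simp [e, f, upperTri_mul, upperTri_zero])
  have e_add_f : e + f = 1 := Subtype.ext (by simp [e, f, upperTri_add, upperTri_one])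
  have map_f : φ (upperTri 0 0 1) = star (φ (upperTri 1 0 0)) := by
    simpa only [map_zero, map_one] using hstar 1 0 0
  have map_eq_zero : ψ = 0 := nonUnitalRingHom_eq_zero_of_map_eq_star hB ψ f_mul_e e_add_f map_f
  exact DFunLike.congr_fun map_eq_zero ⟨upperTri a b c, upperTri_mem_upperTriSubring a b c⟩

/-- Any `ℂ`-linear multiplicative map `φ` from the 2×2 upper triangular
complex matrices (with the involution `M(a,b,c)* = M(conj c, conj b, conj a)`) to a C*-algebra
`B`, intertwining the involutions, vanishes identically.  (The enveloping C*-algebra of this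
Banach *-algebra is 0.) -/
theorem statement14 {B : Type*} [NormedRing B] [StarRing B] [CStarRing B]
    [NormedAlgebra ℂ B] [CompleteSpace B]
    (φ : Matrix (Fin 2) (Fin 2) ℂ → B)
    (hadd : ∀ a b c a' b' c' : ℂ,
      φ (upperTri a b c + upperTri a' b' c') = φ (upperTri a b c) + φ (upperTri a' b' c'))
    (hsmul : ∀ z a b c : ℂ, φ (z • upperTri a b c) = z • φ (upperTri a b c))
    (hmul : ∀ a b c a' b' c' : ℂ,
      φ (upperTri a b c * upperTri a' b' c') = φ (upperTri a b c) * φ (upperTri a' b' c'))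
    (hstar : ∀ a b c : ℂ,
      φ (upperTri (starRingEnd ℂ c) (starRingEnd ℂ b) (starRingEnd ℂ a))
        = star (φ (upperTri a b c))) :
    ∀ a b c : ℂ, φ (upperTri a b c) = 0 :=
  statement14_general (fun x => (CStarRing.star_mul_self_eq_zero_iff x).1) φ hadd hmul hstar
end

section
/- Let (Pₙ)ₙ≥0 be a sequence of orthogonal projections on a complex Hilbert space 𝓗 with P₀ = 0 and Pₙ ∘ Pₙ₊₁ = Pₙ₊₁ ∘ Pₙ = Pₙ for all n (an increasing sequence), and put Qₙ = Pₙ − Pₙ₋₁ for n ≥ 1. Let T be a bounded linear operator on 𝓗 such that ‖(1 − Pₙ₊₁) ∘ T ∘ Pₙ‖ ≤ 2⁻ⁿ and ‖(1 − Pₙ₊₁) ∘ T* ∘ Pₙ‖ ≤ 2⁻ⁿ for all n ≥ 1, where T* is the adjoint of T. Then there exists a constant C such that for every N, ‖Σ_{a=1}^{N} Σ_{b=1}^{N} (b − a) • (Q_a ∘ T ∘ Q_b)‖ ≤ C. -/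
open ContinuousLinearMap

/-!
Put `h = ∑ n Qₙ`. Since `h` is, up to a multiple of the identity, minus the sum of the `Pₙ`, the
truncated commutator is the sum over `n` of the two off-diagonal corners of `T` with respect to
`Pₙ`. The lower corner is
`(1 - Pₙ₊₁) T Pₙ₊₁ = (1 - Pₙ₊₂) T Pₙ₊₁ + Qₙ₊₂ (1 - Pₙ₊₁) T Pₙ + Qₙ₊₂ T Qₙ₊₁`.
The first two terms are summable in norm by the decay hypothesis, while the terms `Qₙ₊₂ T Qₙ₊₁`,
which need not decay, have orthogonal ranges and orthogonal supports, so that their sum has norm at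
most `‖T‖`. The upper corner is the adjoint of the lower corner of `T*`.
-/

section CommutatorIdentity

variable {R A : Type*} [CommRing R] [Ring A] [Algebra R A]

lemma sum_sum_sub_smul_mul_mul {ι : Type*} (s : Finset ι) (f : ι → R) (q : ι → A) (T : A) :
    ∑ a ∈ s, ∑ b ∈ s, (f b - f a) • (q a * T * q b) =
      (∑ a ∈ s, q a) * T * (∑ b ∈ s, f b • q b) - (∑ a ∈ s, f a • q a) * T * ∑ b ∈ s, q b := by
  simp only [sub_smul, Finset.sum_sub_distrib, Finset.sum_mul]
  simp only [Finset.mul_sum, mul_smul_comm, smul_mul_assoc]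

lemma sum_range_nsmul_succ_sub {M : Type*} [AddCommGroup M] (P : ℕ → M) (N : ℕ) :
    ∑ n ∈ Finset.range N, n • (P (n + 1) - P n) =
      ∑ n ∈ Finset.range N, (P N - P (n + 1)) := by
  induction N with
  | zero => simp only [Finset.range_zero, Finset.sum_empty]
  | succ N ih =>
    rw [Finset.sum_range_succ, Finset.sum_range_succ, ih]
    simp only [Finset.sum_sub_distrib, Finset.sum_const, Finset.card_range, nsmul_sub]
    abel

lemma truncated_commutator_eq_sum_corners (P : ℕ → A) (T : A) (N : ℕ) :
    ∑ a ∈ Finset.range N, ∑ b ∈ Finset.range N,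
        ((b : R) - (a : R)) • ((P (a + 1) - P a) * T * (P (b + 1) - P b)) =
      ∑ n ∈ Finset.range N, (P (n + 1) - P 0) * T * (P N - P (n + 1)) -
        ∑ n ∈ Finset.range N, (P N - P (n + 1)) * T * (P (n + 1) - P 0) := by
  rw [sum_sum_sub_smul_mul_mul _ (fun n : ℕ ↦ (n : R))]
  simp only [Nat.cast_smul_eq_nsmul]
  rw [sum_range_nsmul_succ_sub, Finset.sum_range_sub, Finset.mul_sum, Finset.sum_mul,
    Finset.sum_mul, ← Finset.sum_sub_distrib, ← Finset.sum_sub_distrib]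
  exact Finset.sum_congr rfl fun n _ ↦ by noncomm_ring

end CommutatorIdentity

lemma sum_range_succ_add_le_two_mul_tsum {ε : ℕ → ℝ} (hε : Summable ε) (hε₀ : ∀ n, 0 ≤ ε n)
    (N : ℕ) : ∑ n ∈ Finset.range N, (ε (n + 1) + ε n) ≤ 2 * ∑' n, ε n := by
  have shifted_le : ∑ n ∈ Finset.range N, ε (n + 1) ≤ ∑' n, ε n := by
    have := hε.sum_le_tsum (Finset.range (N + 1)) fun n _ ↦ hε₀ n
    rw [Finset.sum_range_succ'] at this
    linarith [hε₀ 0]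
  rw [Finset.sum_add_distrib, two_mul]
  exact add_le_add shifted_le (hε.sum_le_tsum _ fun n _ ↦ hε₀ n)

section StarRing

variable {ι A : Type*}

lemma star_sum_mul_sum_of_pairwise_mul_eq_zero [NonUnitalSemiring A] [StarRing A] {x : ι → A}
    (hx : Pairwise fun i j ↦ star (x i) * x j = 0) (s : Finset ι) :
    star (∑ i ∈ s, x i) * ∑ i ∈ s, x i = ∑ i ∈ s, star (x i) * x i := by
  rw [star_sum, Finset.sum_mul_sum]
  exact Finset.sum_congr rfl fun i hi ↦
    Finset.sum_eq_single_of_mem i hi fun j _ hji ↦ hx hji.symm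

lemma isStarProjection_sum_of_pairwise_mul_eq_zero [Semiring A] [StarRing A] {r : ι → A}
    (hr : ∀ i, IsStarProjection (r i)) (hr_ortho : Pairwise fun i j ↦ r i * r j = 0)
    (s : Finset ι) : IsStarProjection (∑ i ∈ s, r i) where
  isIdempotentElem :=
    OrthogonalIdempotents.isIdempotentElem_sum ⟨fun i ↦ (hr i).isIdempotentElem, hr_ortho⟩
  isSelfAdjoint := isSelfAdjoint_sum s fun i _ ↦ (hr i).isSelfAdjoint

end StarRing

section CStarAlgebra

variable {A : Type*} [CStarAlgebra A] [PartialOrder A] [StarOrderedRing A]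

lemma norm_sum_mul_le_of_pairwise_mul_eq_zero {ι : Type*} {y r : ι → A} {c : ℝ} (hc : 0 ≤ c)
    (hy_ortho : Pairwise fun i j ↦ star (y i) * y j = 0) (hyc : ∀ i, ‖y i‖ ≤ c)
    (hr : ∀ i, IsStarProjection (r i)) (hr_ortho : Pairwise fun i j ↦ r i * r j = 0)
    (s : Finset ι) : ‖∑ i ∈ s, y i * r i‖ ≤ c := by
  have mul_ortho : Pairwise fun i j ↦ star (y i * r i) * (y j * r j) = 0 := by
    intro i j hij
    rw [star_mul, mul_assoc, ← mul_assoc (star (y i)), hy_ortho hij, zero_mul, mul_zero]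
  have term_le (i : ι) : star (y i * r i) * (y i * r i) ≤ c ^ 2 • r i :=
    calc star (y i * r i) * (y i * r i) = star (r i) * (star (y i) * y i) * r i := by
          rw [star_mul]; noncomm_ring
      _ ≤ ‖star (y i) * y i‖ • (star (r i) * r i) :=
          CStarAlgebra.star_left_conjugate_le_norm_smul
      _ = ‖y i‖ ^ 2 • r i := by
          rw [CStarRing.norm_star_mul_self, ← sq, (hr i).isSelfAdjoint.star_eq,
            (hr i).isIdempotentElem.eq]
      _ ≤ c ^ 2 • r i := by
          gcongr
          exacts [(hr i).nonneg, hyc i]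
  refine le_of_sq_le_sq ?_ hc
  calc ‖∑ i ∈ s, y i * r i‖ ^ 2 = ‖∑ i ∈ s, star (y i * r i) * (y i * r i)‖ := by
        rw [sq, ← CStarRing.norm_star_mul_self, star_sum_mul_sum_of_pairwise_mul_eq_zero mul_ortho]
    _ ≤ ‖∑ i ∈ s, c ^ 2 • r i‖ :=
        CStarAlgebra.norm_le_norm_of_nonneg_of_le
          (Finset.sum_nonneg fun i _ ↦ star_mul_self_nonneg _)
          (Finset.sum_le_sum fun i _ ↦ term_le i)
    _ = c ^ 2 * ‖∑ i ∈ s, r i‖ := by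
        rw [← Finset.smul_sum, norm_smul, Real.norm_of_nonneg (sq_nonneg c)]
    _ ≤ c ^ 2 := mul_le_of_le_one_right (sq_nonneg c)
        (isStarProjection_sum_of_pairwise_mul_eq_zero hr hr_ortho s).norm_le

lemma sub_mul_sub_eq_zero_of_le {p p' q q' : A} (hp : IsStarProjection p)
    (hp' : IsStarProjection p') (hq : IsStarProjection q) (hq' : IsStarProjection q')
    (hpq : p ≤ q) (hp'q : p' ≤ q) (hqq' : q ≤ q') : (p' - p) * (q' - q) = 0 := by
  rw [mul_sub, sub_mul, sub_mul, (hp'.le_iff_mul_eq_left hq').1 (hp'q.trans hqq'),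
    (hp.le_iff_mul_eq_left hq').1 (hpq.trans hqq'), (hp'.le_iff_mul_eq_left hq).1 hp'q,
    (hp.le_iff_mul_eq_left hq).1 hpq, sub_self]

variable {P : ℕ → A} (hP : ∀ n, IsStarProjection (P n)) (hmono : Monotone P)
include hP hmono

lemma isStarProjection_succ_sub (n : ℕ) : IsStarProjection (P (n + 1) - P n) :=
  ((hP n).le_iff_sub (hP (n + 1))).1 (hmono n.le_succ)

lemma pairwise_succ_sub_mul_succ_sub_eq_zero :
    Pairwise fun m n ↦ (P (m + 1) - P m) * (P (n + 1) - P n) = 0 := by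
  have zero_of_lt {m n : ℕ} (h : m < n) : (P (m + 1) - P m) * (P (n + 1) - P n) = 0 :=
    sub_mul_sub_eq_zero_of_le (hP _) (hP _) (hP _) (hP _) (hmono h.le) (hmono h)
      (hmono n.le_succ)
  intro m n hmn
  rcases hmn.lt_or_gt with h | h
  · exact zero_of_lt h
  · simpa only [star_mul, star_zero, (isStarProjection_succ_sub hP hmono _).isSelfAdjoint.star_eq]
      using congrArg star (zero_of_lt h)

lemma norm_sum_subdiagonal_blocks_le (T : A) (N : ℕ) :
    ‖∑ n ∈ Finset.range N, (P (n + 2) - P (n + 1)) * T * (P (n + 1) - P n)‖ ≤ ‖T‖ := by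
  have hQ := isStarProjection_succ_sub hP hmono
  have hQ_ortho := pairwise_succ_sub_mul_succ_sub_eq_zero hP hmono
  refine norm_sum_mul_le_of_pairwise_mul_eq_zero (norm_nonneg T) (fun m n hmn ↦ ?_)
    (fun n ↦ ?_) hQ hQ_ortho _
  · beta_reduce
    rw [star_mul, (hQ (m + 1)).isSelfAdjoint.star_eq, mul_assoc,
      ← mul_assoc (P (m + 2) - P (m + 1)), hQ_ortho (by simpa using hmn), zero_mul, mul_zero]
  · exact (norm_mul_le _ _).trans
      (mul_le_of_le_one_left (norm_nonneg T) (hQ (n + 1)).norm_le)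

lemma lower_corner_succ_eq (T : A) (n : ℕ) :
    (1 - P (n + 1)) * T * P (n + 1) =
      (1 - P (n + 2)) * T * P (n + 1) + (P (n + 2) - P (n + 1)) * ((1 - P (n + 1)) * T * P n) +
        (P (n + 2) - P (n + 1)) * T * (P (n + 1) - P n) := by
  have absorb : (P (n + 2) - P (n + 1)) * (1 - P (n + 1)) = P (n + 2) - P (n + 1) := by
    rw [mul_sub, mul_one, sub_mul, ((hP _).le_iff_mul_eq_right (hP _)).1 (hmono (n + 1).le_succ),
      (hP _).isIdempotentElem.eq, sub_self, sub_zero]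
  rw [← mul_assoc _ (_ * T), ← mul_assoc _ (1 - _), absorb]
  noncomm_ring

variable {ε : ℕ → ℝ} {T : A}

lemma norm_sum_lower_corners_le (hT : ∀ n, ‖(1 - P (n + 1)) * T * P n‖ ≤ ε n) (N : ℕ) :
    ‖∑ n ∈ Finset.range N, (1 - P (n + 1)) * T * P (n + 1)‖ ≤
      ∑ n ∈ Finset.range N, (ε (n + 1) + ε n) + ‖T‖ := by
  simp only [lower_corner_succ_eq hP hmono T]
  rw [Finset.sum_add_distrib]
  refine (norm_add_le _ _).trans (add_le_add (norm_sum_le_of_le _ fun n _ ↦ ?_)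
    (norm_sum_subdiagonal_blocks_le hP hmono T N))
  have norm_le : ‖(P (n + 2) - P (n + 1)) * ((1 - P (n + 1)) * T * P n)‖ ≤ ε n :=
    (norm_mul_le _ _).trans <| (mul_le_of_le_one_left (norm_nonneg _)
      (isStarProjection_succ_sub hP hmono (n + 1)).norm_le).trans (hT n)
  exact norm_add_le_of_le (hT (n + 1)) norm_le

lemma norm_sum_truncated_lower_corners_le (hε : Summable ε)
    (hT : ∀ n, ‖(1 - P (n + 1)) * T * P n‖ ≤ ε n) (N : ℕ) :
    ‖∑ n ∈ Finset.range N, (P N - P (n + 1)) * T * (P (n + 1) - P 0)‖ ≤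
      2 * ∑' n, ε n + ‖T‖ := by
  have compression_eq : ∑ n ∈ Finset.range N, (P N - P (n + 1)) * T * (P (n + 1) - P 0) =
      P N * (∑ n ∈ Finset.range N, (1 - P (n + 1)) * T * P (n + 1)) * (1 - P 0) := by
    rw [Finset.mul_sum, Finset.sum_mul]
    refine Finset.sum_congr rfl fun n hn ↦ ?_
    have left_eq : P N * (1 - P (n + 1)) = P N - P (n + 1) := by
      rw [mul_sub, mul_one,
        ((hP _).le_iff_mul_eq_right (hP _)).1 (hmono (Finset.mem_range.1 hn))]
    have right_eq : P (n + 1) * (1 - P 0) = P (n + 1) - P 0 := by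
      rw [mul_sub, mul_one, ((hP _).le_iff_mul_eq_right (hP _)).1 (hmono (n + 1).zero_le)]
    rw [← left_eq, ← right_eq]
    noncomm_ring
  calc ‖∑ n ∈ Finset.range N, (P N - P (n + 1)) * T * (P (n + 1) - P 0)‖
    _ ≤ ‖∑ n ∈ Finset.range N, (1 - P (n + 1)) * T * P (n + 1)‖ := by
        rw [compression_eq]
        exact (norm_mul_le _ _).trans <|
          (mul_le_of_le_one_right (norm_nonneg _) (hP 0).one_sub.norm_le).trans <|
          (norm_mul_le _ _).trans (mul_le_of_le_one_left (norm_nonneg _) (hP N).norm_le)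
    _ ≤ ∑ n ∈ Finset.range N, (ε (n + 1) + ε n) + ‖T‖ :=
        norm_sum_lower_corners_le hP hmono hT N
    _ ≤ 2 * ∑' n, ε n + ‖T‖ := by
        gcongr
        exact sum_range_succ_add_le_two_mul_tsum hε (fun n ↦ (norm_nonneg _).trans (hT n)) N

end CStarAlgebra

theorem statement15_general {A : Type*} [CStarAlgebra A] [PartialOrder A] [StarOrderedRing A]
    {P : ℕ → A} (hP : ∀ n, IsStarProjection (P n)) (hmono : Monotone P) {T : A} {ε : ℕ → ℝ}
    (hε : Summable ε)
    (hT : ∀ n, ‖(1 - P (n + 1)) * T * P n‖ ≤ ε n)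
    (hT' : ∀ n, ‖(1 - P (n + 1)) * star T * P n‖ ≤ ε n) (N : ℕ) :
    ‖∑ a ∈ Finset.Icc 1 N, ∑ b ∈ Finset.Icc 1 N,
        ((b : ℝ) - (a : ℝ)) • ((P a - P (a - 1)) * T * (P b - P (b - 1)))‖ ≤
      4 * ∑' n, ε n + 2 * ‖T‖ := by
  have upper_eq_star_lower :
      ∑ n ∈ Finset.range N, (P (n + 1) - P 0) * T * (P N - P (n + 1)) =
        star (∑ n ∈ Finset.range N, (P N - P (n + 1)) * star T * (P (n + 1) - P 0)) := by
    simp only [star_sum, star_mul, star_sub, star_star, (hP _).isSelfAdjoint.star_eq, mul_assoc]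
  have lower_le := norm_sum_truncated_lower_corners_le hP hmono hε hT N
  have upper_le := norm_sum_truncated_lower_corners_le hP hmono hε hT' N
  rw [norm_star, ← norm_star, ← upper_eq_star_lower] at upper_le
  have sum_Icc_eq (f : ℕ → A) : ∑ a ∈ Finset.Icc 1 N, f a = ∑ a ∈ Finset.range N, f (a + 1) := by
    rw [Finset.range_eq_Ico, Finset.sum_Ico_add', zero_add, Finset.Ico_add_one_right_eq_Icc]
  simp only [sum_Icc_eq, Nat.cast_add, Nat.cast_one, add_sub_add_right_eq_sub, Nat.add_sub_cancel]
  rw [truncated_commutator_eq_sum_corners]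
  refine (norm_sub_le_of_le upper_le lower_le).trans_eq ?_
  ring

/-- Let `(Pₙ)` be an increasing sequence of orthogonal projections on a complex
Hilbert space with `P₀ = 0`, `Qₙ = Pₙ − Pₙ₋₁`, and let `T` be a bounded operator with
`‖(1 − Pₙ₊₁) T Pₙ‖ ≤ 2⁻ⁿ` and `‖(1 − Pₙ₊₁) T* Pₙ‖ ≤ 2⁻ⁿ` for `n ≥ 1`.  Then the partial sums
`Σ_{a,b=1}^N (b − a) Q_a T Q_b` are uniformly bounded in norm.  (The commutator of `T` with
`h = Σ n Qₙ` is bounded.) -/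
theorem statement15 {𝓗 : Type*} [NormedAddCommGroup 𝓗] [InnerProductSpace ℂ 𝓗]
    [CompleteSpace 𝓗]
    (P : ℕ → 𝓗 →L[ℂ] 𝓗) (hP0 : P 0 = 0)
    (hsa : ∀ n : ℕ, IsSelfAdjoint (P n))
    (hidem : ∀ n : ℕ, (P n).comp (P n) = P n)
    (hincr : ∀ n : ℕ, (P n).comp (P (n + 1)) = P n ∧ (P (n + 1)).comp (P n) = P n)
    (T : 𝓗 →L[ℂ] 𝓗)
    (hT : ∀ n : ℕ, 1 ≤ n →
      ‖((1 : 𝓗 →L[ℂ] 𝓗) - P (n + 1)).comp (T.comp (P n))‖ ≤ ((2 : ℝ) ^ n)⁻¹)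
    (hT' : ∀ n : ℕ, 1 ≤ n →
      ‖((1 : 𝓗 →L[ℂ] 𝓗) - P (n + 1)).comp ((ContinuousLinearMap.adjoint T).comp (P n))‖
        ≤ ((2 : ℝ) ^ n)⁻¹) :
    ∃ C : ℝ, ∀ N : ℕ,
      ‖∑ a ∈ Finset.Icc 1 N, ∑ b ∈ Finset.Icc 1 N,
        (((b : ℝ) - (a : ℝ)) •
          ((P a - P (a - 1)).comp (T.comp (P b - P (b - 1)))))‖ ≤ C := by
  have hP (n : ℕ) : IsStarProjection (P n) := ⟨hidem n, hsa n⟩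
  have hmono : Monotone P := monotone_nat_of_le_succ fun n ↦
    ((hP n).le_iff_mul_eq_left (hP (n + 1))).2 (hincr n).1
  have extend_to_zero {S : 𝓗 →L[ℂ] 𝓗}
      (hS : ∀ n, 1 ≤ n → ‖(1 - P (n + 1)).comp (S.comp (P n))‖ ≤ ((2 : ℝ) ^ n)⁻¹) (n : ℕ) :
      ‖(1 - P (n + 1)) * S * P n‖ ≤ (1 / 2 : ℝ) ^ n := by
    rcases n.eq_zero_or_pos with rfl | hn
    · simp [hP0]
    · rw [one_div, inv_pow]
      exact hS n hn
  exact ⟨_, statement15_general hP hmono summable_geometric_two (extend_to_zero hT)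
    (extend_to_zero hT')⟩
end
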